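/- arXiv:1612.08485 — 2 statements merged into one kernel-verified Lean document; each statement's English description precedes it below -/
import Mathlib

section
/- Let 0 ≤ q < d and let X and Y be cubical sets in ℝ^d with X ⊆ Y and #Y finite. Then |β_q(Y) − β_q(X)| ≤ #Y − #X. -/
open MeasureTheory Filter Topology

noncomputable section

/-- An elementary cube in `ℝ^d`: the `i`-th component is the elementary interval
`[l, l+1]` if the Boolean is `true` (nondegenerate) and `[l, l]` if `false` (degenerate). -/
abbrev ElemCube (d : ℕ) := Fin d → ℤ × Bool

/-- The dimension of an elementary cube: the number of nondegenerate components. -/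
def cubeDim {d : ℕ} (Q : ElemCube d) : ℕ :=
  (Finset.univ.filter fun i => (Q i).2 = true).card

/-- The geometric realization of an elementary cube as a subset of `ℝ^d`. -/
def cubeSet {d : ℕ} (Q : ElemCube d) : Set (Fin d → ℝ) :=
  {x | ∀ i, x i ∈ Set.Icc ((Q i).1 : ℝ) ((Q i).1 + (if (Q i).2 then 1 else 0))}

/-- A cubical set is a union of elementary cubes. -/
def IsCubical {d : ℕ} (X : Set (Fin d → ℝ)) : Prop :=
  ∃ S : Set (ElemCube d), X = ⋃ Q ∈ S, cubeSet Q

/-- The free `ℤ`-module generated by all elementary cubes of `ℝ^d` (all dimensions mixed). -/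
abbrev CubChain (d : ℕ) := ElemCube d →₀ ℤ

/-- The cubical boundary of a single elementary cube, defined by induction on the ambient
dimension, following the inductive definition: in `ℝ¹`, `∂ [l,l+1]^ = [l+1]^ - [l]^` and
`∂ Q̂ = 0` for degenerate `Q`; and for `Q = I × P`,
`∂ Q̂ = (∂ Î) ⋄ P̂ + (-1)^(dim I) Î ⋄ (∂ P̂)`, where `⋄` is the cubical product. -/
def boundaryCube : (d : ℕ) → ElemCube d → CubChain d
  | 0, _ => 0
  | d + 1, Q =>
      (if (Q 0).2 then
          Finsupp.single (Fin.cons ((Q 0).1 + 1, false) (fun i => Q i.succ)) (1 : ℤ)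
            - Finsupp.single (Fin.cons ((Q 0).1, false) (fun i => Q i.succ)) (1 : ℤ)
        else 0)
      + (if (Q 0).2 then (-1 : ℤ) else 1) •
          (boundaryCube d (fun i => Q i.succ)).sum
            (fun R n => Finsupp.single (Fin.cons (Q 0) R) n)

/-- The cubical boundary operator, the `ℤ`-linear extension of `boundaryCube`. -/
def boundaryHom (d : ℕ) : CubChain d →ₗ[ℤ] CubChain d :=
  Finsupp.lsum ℤ fun Q => LinearMap.toSpanSingleton ℤ (CubChain d) (boundaryCube d Q)

/-- `C_k^d(X)`: the submodule of chains supported on the `k`-dimensional elementary cubes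
contained in `X`. -/
def chainsOn (d k : ℕ) (X : Set (Fin d → ℝ)) : Submodule ℤ (CubChain d) :=
  Finsupp.supported ℤ ℤ {Q : ElemCube d | cubeDim Q = k ∧ cubeSet Q ⊆ X}

/-- `Z_q(X) = ker ∂_q^X`, the cycles of the cubical set `X` in degree `q`. -/
def cycleMod (d q : ℕ) (X : Set (Fin d → ℝ)) : Submodule ℤ (CubChain d) :=
  chainsOn d q X ⊓ LinearMap.ker (boundaryHom d)

/-- `B_q(X) = im ∂_{q+1}^X`, the boundaries of the cubical set `X` in degree `q`. -/
def boundaryMod (d q : ℕ) (X : Set (Fin d → ℝ)) : Submodule ℤ (CubChain d) :=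
  Submodule.map (boundaryHom d) (chainsOn d (q + 1) X)

/-- The `q`-th Betti number of a cubical set: the rank of the free part of the `q`-th
cubical homology `H_q(X) = Z_q(X) / B_q(X)`. -/
def betti (d q : ℕ) (X : Set (Fin d → ℝ)) : ℕ :=
  Module.finrank ℤ
    (↥(cycleMod d q X) ⧸ (boundaryMod d q X).comap (cycleMod d q X).subtype)

/-- `Λ_n = [-n, n]^d ⊆ ℝ^d`. -/
def lambda (d n : ℕ) : Set (Fin d → ℝ) := {x | ∀ i, x i ∈ Set.Icc (-(n : ℝ)) n}

/-- `#X`: the number of elementary cubes contained in `X` (junk value `0` if infinite). -/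
def cubeCount {d : ℕ} (X : Set (Fin d → ℝ)) : ℕ :=
  {Q : ElemCube d | cubeSet Q ⊆ X}.ncard

/-!
Write `n_k`, `z_k`, `b_k` for the ranks of `C_k`, `Z_k`, `B_k`. Then `β_q = z_q - b_q` because
`B_q ≤ Z_q`, and `n_k = z_k + b_{k-1}` by rank-nullity. When passing from `X` to `Y` all of these
ranks grow, so `z_q` grows by at most the increase of `n_q`, and `b_q` by at most the increase of
`n_{q+1}`. Both increases count cubes of `Y` not in `X`.
-/

section RankNullity

variable {R M N : Type*} [CommRing R] [IsDomain R] [AddCommGroup M] [Module R M]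
  [AddCommGroup N] [Module R N]

theorem finrank_inf_ker_add_finrank_map (f : M →ₗ[R] N) (C : Submodule R M) [Module.Finite R C] :
    Module.finrank R ↥(C ⊓ LinearMap.ker f) + Module.finrank R (C.map f) = Module.finrank R C := by
  have finrank_ker : Module.finrank R (LinearMap.ker (f.domRestrict C)) =
      Module.finrank R ↥(C ⊓ LinearMap.ker f) := by
    rw [LinearMap.ker_domRestrict, ← Submodule.finrank_map_subtype_eq, Submodule.map_comap_subtype]
  have finrank_range : Module.finrank R (C ⧸ LinearMap.ker (f.domRestrict C)) =
      Module.finrank R (C.map f) := by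
    rw [(f.domRestrict C).quotKerEquivRange.finrank_eq, LinearMap.range_domRestrict]
  rw [← Submodule.finrank_quotient_add_finrank (LinearMap.ker (f.domRestrict C)), finrank_ker,
    finrank_range, add_comm]

variable [IsNoetherianRing R] {C D : Submodule R M} [Module.Finite R D]

theorem finrank_inf_ker_add_finrank_le (f : M →ₗ[R] N) (hCD : C ≤ D) :
    Module.finrank R ↥(D ⊓ LinearMap.ker f) + Module.finrank R C ≤
      Module.finrank R ↥(C ⊓ LinearMap.ker f) + Module.finrank R D := by
  have := Module.Finite.of_injective _ (Submodule.inclusion_injective hCD)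
  have map_le := Submodule.finrank_mono (Submodule.map_mono (f := f) hCD)
  have rank_nullity_C := finrank_inf_ker_add_finrank_map f C
  have rank_nullity_D := finrank_inf_ker_add_finrank_map f D
  omega

theorem finrank_map_add_finrank_le (f : M →ₗ[R] N) (hCD : C ≤ D) :
    Module.finrank R (D.map f) + Module.finrank R C ≤
      Module.finrank R (C.map f) + Module.finrank R D := by
  have := Module.Finite.of_injective _ (Submodule.inclusion_injective hCD)
  have := Module.Finite.of_injective _
    (Submodule.inclusion_injective (inf_le_left : D ⊓ LinearMap.ker f ≤ D))
  have ker_le := Submodule.finrank_mono (inf_le_inf_right (LinearMap.ker f) hCD)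
  have rank_nullity_C := finrank_inf_ker_add_finrank_map f C
  have rank_nullity_D := finrank_inf_ker_add_finrank_map f D
  omega

end RankNullity

section Supported

variable {R α : Type*} [Semiring R] {s : Set α}

theorem moduleFinite_supported (hs : s.Finite) : Module.Finite R (Finsupp.supported R R s) :=
  have := hs.to_subtype
  Module.Finite.equiv (Finsupp.supportedEquivFinsupp s).symm

theorem finrank_supported [StrongRankCondition R] (s : Set α) :
    Module.finrank R (Finsupp.supported R R s) = s.ncard := by
  rw [(Finsupp.supportedEquivFinsupp s).finrank_eq, Module.finrank, rank_finsupp_self,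
    Cardinal.toNat_lift, ← Nat.card_coe_set_eq, Nat.card]

end Supported

section Facets

variable {d : ℕ}

theorem cubeDim_cons (I : ℤ × Bool) (P : ElemCube d) :
    cubeDim (Fin.cons I P : ElemCube (d + 1)) = (if I.2 then 1 else 0) + cubeDim P := by
  simp only [cubeDim, Fin.card_filter_univ_succ', Fin.cons_zero, Fin.cons_succ]

theorem mem_cubeSet_cons {I : ℤ × Bool} {P : ElemCube d} {x : Fin (d + 1) → ℝ} :
    x ∈ cubeSet (Fin.cons I P : ElemCube (d + 1)) ↔
      x 0 ∈ Set.Icc (I.1 : ℝ) (I.1 + if I.2 then 1 else 0) ∧ Fin.tail x ∈ cubeSet P := by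
  simp only [cubeSet, Set.mem_ofPred_eq, Fin.forall_fin_succ, Fin.cons_zero, Fin.cons_succ,
    Fin.tail]

/-- The codimension-one faces of `Q`, on which `∂ Q̂` is supported, encoded as the elementary cubes
contained in `Q` of dimension one less. -/
def facets (Q : ElemCube d) : Set (ElemCube d) :=
  {R | cubeDim R + 1 = cubeDim Q ∧ cubeSet R ⊆ cubeSet Q}

theorem cons_mem_facets (I : ℤ × Bool) {P R : ElemCube d} (hR : R ∈ facets P) :
    (Fin.cons I R : ElemCube (d + 1)) ∈ facets (Fin.cons I P : ElemCube (d + 1)) := by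
  refine ⟨?_, fun x hx => ?_⟩
  · rw [cubeDim_cons, cubeDim_cons, ← hR.1, add_assoc]
  · rw [mem_cubeSet_cons] at hx ⊢
    exact ⟨hx.1, hR.2 hx.2⟩

theorem cons_left_mem_facets (l : ℤ) (P : ElemCube d) :
    (Fin.cons (l, false) P : ElemCube (d + 1)) ∈
      facets (Fin.cons (l, true) P : ElemCube (d + 1)) := by
  refine ⟨by simp [cubeDim_cons, add_comm], fun x hx => ?_⟩
  rw [mem_cubeSet_cons] at hx ⊢
  exact ⟨Set.Icc_subset_Icc_right (by simp) hx.1, hx.2⟩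

theorem cons_right_mem_facets (l : ℤ) (P : ElemCube d) :
    (Fin.cons (l + 1, false) P : ElemCube (d + 1)) ∈
      facets (Fin.cons (l, true) P : ElemCube (d + 1)) := by
  refine ⟨by simp [cubeDim_cons, add_comm], fun x hx => ?_⟩
  rw [mem_cubeSet_cons] at hx ⊢
  exact ⟨Set.Icc_subset_Icc (by simp) (by simp) hx.1, hx.2⟩

end Facets

section Boundary

variable {d : ℕ}

/-- The cubical product `Î ⋄ c` of an elementary interval `I`, encoded as in `ElemCube`, with a
chain `c`; it expresses the recursion for `∂` on chains instead of single cubes. -/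
def intervalProd (I : ℤ × Bool) : CubChain d →ₗ[ℤ] CubChain (d + 1) :=
  Finsupp.lmapDomain ℤ ℤ fun P => (Fin.cons I P : ElemCube (d + 1))

theorem intervalProd_single (I : ℤ × Bool) (P : ElemCube d) (n : ℤ) :
    intervalProd I (Finsupp.single P n) = Finsupp.single (Fin.cons I P : ElemCube (d + 1)) n :=
  Finsupp.mapDomain_single

theorem boundaryHom_single (Q : ElemCube d) :
    boundaryHom d (Finsupp.single Q 1) = boundaryCube d Q := by
  simp [boundaryHom]

theorem boundaryCube_cons_false (l : ℤ) (P : ElemCube d) :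
    boundaryCube (d + 1) (Fin.cons (l, false) P : ElemCube (d + 1)) =
      intervalProd (l, false) (boundaryCube d P) := by
  simp [boundaryCube, intervalProd, Finsupp.mapDomain]

theorem boundaryCube_cons_true (l : ℤ) (P : ElemCube d) :
    boundaryCube (d + 1) (Fin.cons (l, true) P : ElemCube (d + 1)) =
      Finsupp.single (Fin.cons (l + 1, false) P : ElemCube (d + 1)) 1 -
        Finsupp.single (Fin.cons (l, false) P : ElemCube (d + 1)) 1 -
          intervalProd (l, true) (boundaryCube d P) := by
  simp [boundaryCube, intervalProd, Finsupp.mapDomain, sub_eq_add_neg]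

theorem boundaryHom_intervalProd_false (l : ℤ) (c : CubChain d) :
    boundaryHom (d + 1) (intervalProd (l, false) c) =
      intervalProd (l, false) (boundaryHom d c) := by
  suffices boundaryHom (d + 1) ∘ₗ intervalProd (l, false) =
      intervalProd (l, false) ∘ₗ boundaryHom d from LinearMap.congr_fun this c
  ext1 P
  ext1
  simp only [LinearMap.comp_apply, Finsupp.lsingle_apply, intervalProd_single, boundaryHom_single,
    boundaryCube_cons_false]

theorem boundaryHom_intervalProd_true (l : ℤ) (c : CubChain d) :
    boundaryHom (d + 1) (intervalProd (l, true) c) =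
      intervalProd (l + 1, false) c - intervalProd (l, false) c -
        intervalProd (l, true) (boundaryHom d c) := by
  suffices boundaryHom (d + 1) ∘ₗ intervalProd (l, true) =
      intervalProd (l + 1, false) - intervalProd (l, false) -
        intervalProd (l, true) ∘ₗ boundaryHom d from LinearMap.congr_fun this c
  ext1 P
  ext1
  simp only [LinearMap.comp_apply, LinearMap.sub_apply, Finsupp.lsingle_apply, intervalProd_single,
    boundaryHom_single, boundaryCube_cons_true]

theorem boundaryHom_boundaryCube (Q : ElemCube d) : boundaryHom d (boundaryCube d Q) = 0 := by
  induction d with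
  | zero => simp [boundaryCube]
  | succ d ih =>
    cases Q using Fin.consCases with | _ I P
    obtain ⟨l, _ | _⟩ := I
    · rw [boundaryCube_cons_false, boundaryHom_intervalProd_false, ih, map_zero]
    · rw [boundaryCube_cons_true, map_sub, map_sub, boundaryHom_single, boundaryHom_single,
        boundaryCube_cons_false, boundaryCube_cons_false, boundaryHom_intervalProd_true, ih,
        map_zero, sub_zero, sub_self]

theorem boundaryHom_comp_boundaryHom (d : ℕ) : boundaryHom d ∘ₗ boundaryHom d = 0 := by
  ext1 Q
  ext1
  simp only [LinearMap.comp_apply, Finsupp.lsingle_apply, boundaryHom_single,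
    boundaryHom_boundaryCube, LinearMap.zero_apply]

theorem intervalProd_mem_supported_facets (I : ℤ × Bool) {P : ElemCube d} {c : CubChain d}
    (hc : c ∈ Finsupp.supported ℤ ℤ (facets P)) :
    intervalProd I c ∈ Finsupp.supported ℤ ℤ (facets (Fin.cons I P : ElemCube (d + 1))) :=
  Finsupp.supported_comap_lmapDomain ℤ ℤ _ _
    (Finsupp.supported_mono (fun _ hR => cons_mem_facets I hR) hc)

theorem boundaryCube_mem_supported_facets (Q : ElemCube d) :
    boundaryCube d Q ∈ Finsupp.supported ℤ ℤ (facets Q) := by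
  induction d with
  | zero => exact Submodule.zero_mem _
  | succ d ih =>
    cases Q using Fin.consCases with | _ I P
    obtain ⟨l, _ | _⟩ := I
    · rw [boundaryCube_cons_false]
      exact intervalProd_mem_supported_facets _ (ih P)
    · rw [boundaryCube_cons_true]
      exact Submodule.sub_mem _
        (Submodule.sub_mem _ (Finsupp.single_mem_supported ℤ _ (cons_right_mem_facets l P))
          (Finsupp.single_mem_supported ℤ _ (cons_left_mem_facets l P)))
        (intervalProd_mem_supported_facets _ (ih P))

end Boundary

section Homology

variable {d : ℕ}

/-- The `k`-dimensional elementary cubes contained in `X`, that is, the basis of `C_k^d(X)`. -/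
def cubesOfDim (k : ℕ) (X : Set (Fin d → ℝ)) : Set (ElemCube d) :=
  {Q | cubeDim Q = k ∧ cubeSet Q ⊆ X}

variable {k q : ℕ} {X Y : Set (Fin d → ℝ)}

theorem cubesOfDim_mono (hXY : X ⊆ Y) : cubesOfDim k X ⊆ cubesOfDim k Y :=
  fun _ hQ => ⟨hQ.1, hQ.2.trans hXY⟩

theorem ncard_cubesOfDim_add_cubeCount_le (hXY : X ⊆ Y)
    (hfin : {Q : ElemCube d | cubeSet Q ⊆ Y}.Finite) :
    (cubesOfDim k Y).ncard + cubeCount X ≤ (cubesOfDim k X).ncard + cubeCount Y := by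
  have new_cubes_le : (cubesOfDim k Y \ cubesOfDim k X).ncard ≤
      ({Q : ElemCube d | cubeSet Q ⊆ Y} \ {Q | cubeSet Q ⊆ X}).ncard :=
    Set.ncard_le_ncard (fun Q hQ => ⟨hQ.1.2, fun hQX => hQ.2 ⟨hQ.1.1, hQX⟩⟩) hfin.sdiff
  have card_dim := Set.ncard_sdiff_add_ncard_of_subset (cubesOfDim_mono (k := k) hXY)
    (hfin.subset fun Q hQ => hQ.2)
  have cubes_subset : {Q : ElemCube d | cubeSet Q ⊆ X} ⊆ {Q | cubeSet Q ⊆ Y} :=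
    fun Q hQ => hQ.trans hXY
  have card_all := Set.ncard_sdiff_add_ncard_of_subset cubes_subset hfin
  rw [cubeCount, cubeCount]
  omega

theorem chainsOn_mono (hXY : X ⊆ Y) : chainsOn d k X ≤ chainsOn d k Y :=
  Finsupp.supported_mono (cubesOfDim_mono hXY)

theorem finrank_chainsOn : Module.finrank ℤ (chainsOn d k X) = (cubesOfDim k X).ncard :=
  finrank_supported _

theorem moduleFinite_chainsOn (hX : (cubesOfDim k X).Finite) : Module.Finite ℤ (chainsOn d k X) :=
  moduleFinite_supported hX

theorem map_boundaryHom_chainsOn_le :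
    (chainsOn d (k + 1) X).map (boundaryHom d) ≤ chainsOn d k X := by
  rw [chainsOn, Finsupp.supported_eq_span_single, Submodule.map_span_le]
  rintro _ ⟨Q, ⟨hdim, hQX⟩, rfl⟩
  rw [boundaryHom_single]
  have facets_subset : facets Q ⊆ cubesOfDim k X := fun R hR =>
    ⟨Nat.succ_injective (hR.1.trans hdim), hR.2.trans hQX⟩
  exact Finsupp.supported_mono facets_subset (boundaryCube_mem_supported_facets Q)

theorem boundaryMod_le_cycleMod : boundaryMod d q X ≤ cycleMod d q X := by
  refine le_inf map_boundaryHom_chainsOn_le ?_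
  rintro _ ⟨c, -, rfl⟩
  exact LinearMap.congr_fun (boundaryHom_comp_boundaryHom d) c

theorem moduleFinite_cycleMod (hX : (cubesOfDim q X).Finite) :
    Module.Finite ℤ (cycleMod d q X) :=
  have := moduleFinite_chainsOn hX
  Module.Finite.of_injective _ (Submodule.inclusion_injective inf_le_left)

theorem betti_add_finrank_boundaryMod (hX : (cubesOfDim q X).Finite) :
    betti d q X + Module.finrank ℤ (boundaryMod d q X) = Module.finrank ℤ (cycleMod d q X) := by
  have := moduleFinite_cycleMod hX
  rw [betti, ← (Submodule.comapSubtypeEquivOfLe boundaryMod_le_cycleMod).finrank_eq,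
    Submodule.finrank_quotient_add_finrank]

theorem finrank_cycleMod_add_ncard_le (hXY : X ⊆ Y) (hY : (cubesOfDim q Y).Finite) :
    Module.finrank ℤ (cycleMod d q Y) + (cubesOfDim q X).ncard ≤
      Module.finrank ℤ (cycleMod d q X) + (cubesOfDim q Y).ncard := by
  have := moduleFinite_chainsOn hY
  rw [← finrank_chainsOn, ← finrank_chainsOn]
  exact finrank_inf_ker_add_finrank_le _ (chainsOn_mono hXY)

theorem finrank_boundaryMod_add_ncard_le (hXY : X ⊆ Y) (hY : (cubesOfDim (q + 1) Y).Finite) :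
    Module.finrank ℤ (boundaryMod d q Y) + (cubesOfDim (q + 1) X).ncard ≤
      Module.finrank ℤ (boundaryMod d q X) + (cubesOfDim (q + 1) Y).ncard := by
  have := moduleFinite_chainsOn hY
  rw [← finrank_chainsOn, ← finrank_chainsOn]
  exact finrank_map_add_finrank_le _ (chainsOn_mono hXY)

theorem betti_add_ncard_cubesOfDim_le (hXY : X ⊆ Y) (hY : (cubesOfDim q Y).Finite) :
    betti d q Y + (cubesOfDim q X).ncard ≤ betti d q X + (cubesOfDim q Y).ncard := by
  have := moduleFinite_cycleMod hY
  have := Module.Finite.of_injective _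
    (Submodule.inclusion_injective (boundaryMod_le_cycleMod (q := q) (X := Y)))
  have boundary_le : Module.finrank ℤ (boundaryMod d q X) ≤ Module.finrank ℤ (boundaryMod d q Y) :=
    Submodule.finrank_mono (Submodule.map_mono (chainsOn_mono hXY))
  have cycle_le := finrank_cycleMod_add_ncard_le hXY hY
  have betti_X := betti_add_finrank_boundaryMod (hY.subset (cubesOfDim_mono hXY))
  have betti_Y := betti_add_finrank_boundaryMod hY
  omega

theorem betti_add_ncard_cubesOfDim_succ_le (hXY : X ⊆ Y) (hY : (cubesOfDim q Y).Finite)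
    (hY' : (cubesOfDim (q + 1) Y).Finite) :
    betti d q X + (cubesOfDim (q + 1) X).ncard ≤ betti d q Y + (cubesOfDim (q + 1) Y).ncard := by
  have := moduleFinite_cycleMod hY
  have cycle_le : Module.finrank ℤ (cycleMod d q X) ≤ Module.finrank ℤ (cycleMod d q Y) :=
    Submodule.finrank_mono (inf_le_inf_right _ (chainsOn_mono hXY))
  have boundary_le := finrank_boundaryMod_add_ncard_le hXY hY'
  have betti_X := betti_add_finrank_boundaryMod (hY.subset (cubesOfDim_mono hXY))
  have betti_Y := betti_add_finrank_boundaryMod hY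
  omega

theorem betti_diff_le_general (hXY : X ⊆ Y) (hfin : {Q : ElemCube d | cubeSet Q ⊆ Y}.Finite) :
    |(betti d q Y : ℤ) - (betti d q X : ℤ)| ≤ (cubeCount Y : ℤ) - (cubeCount X : ℤ) := by
  have finite_dim (k : ℕ) : (cubesOfDim k Y).Finite := hfin.subset fun Q hQ => hQ.2
  have upper := betti_add_ncard_cubesOfDim_le hXY (finite_dim q)
  have lower := betti_add_ncard_cubesOfDim_succ_le hXY (finite_dim q) (finite_dim (q + 1))
  have new_q := ncard_cubesOfDim_add_cubeCount_le (k := q) hXY hfin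
  have new_succ := ncard_cubesOfDim_add_cubeCount_le (k := q + 1) hXY hfin
  rw [abs_le]
  constructor <;> omega

end Homology

/-- If `X ⊆ Y` are cubical sets in `ℝ^d` with `#Y` finite and `0 ≤ q < d`,
then `|β_q(Y) - β_q(X)| ≤ #Y - #X`. -/
theorem betti_diff_le (d q : ℕ) (hq : q < d) (X Y : Set (Fin d → ℝ))
    (hX : IsCubical X) (hY : IsCubical Y) (hXY : X ⊆ Y)
    (hfin : {Q : ElemCube d | cubeSet Q ⊆ Y}.Finite) :
    |(betti d q Y : ℤ) - (betti d q X : ℤ)| ≤ (cubeCount Y : ℤ) - (cubeCount X : ℤ) :=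
  betti_diff_le_general hXY hfin

end
end

section
/- Let X and Y be cubical sets in ℝ^d with X ⊆ Y. Assume there exists a cubical set Z = Q_1 ∪ ⋯ ∪ Q_m, where each Q_i is a d-dimensional elementary cube, such that Y \ X ⊆ Z. Then #Y − #X ≤ 3^d |Z|, where |Z| denotes the Lebesgue measure of Z. -/
open MeasureTheory Filter Topology
open scoped ENNReal

noncomputable section

/-! A cubical set contains an elementary cube `Q` as soon as it contains the center of `Q`. Hence
every cube of `Y` that is not a cube of `X` has its center in `Y \ X ⊆ Z`, so it is a cube of `Z`
and therefore a face of one of the `Q_i`. A `d`-dimensional cube has `3 ^ d` faces, and `|Z|` is the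
number of distinct `Q_i`, because these are unit cubes that overlap only in null sets. -/

section Interval

/-- The elementary interval encoded by a pair as in `ElemCube`: the real interval `[l, l + 1]` for
`(l, true)` and the point `[l, l]` for `(l, false)`. -/
def elemInterval (I : ℤ × Bool) : Set ℝ :=
  Set.Icc (I.1 : ℝ) (I.1 + (if I.2 then 1 else 0))

/-- The midpoint of an elementary interval; for a degenerate interval, its only point. -/
def intervalMidpoint (I : ℤ × Bool) : ℝ :=
  I.1 + (if I.2 then 1 / 2 else 0)

/-- The elementary intervals contained in a given one: the interval itself and, if it is
nondegenerate, its two endpoints. -/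
def intervalFaces (I : ℤ × Bool) : Finset (ℤ × Bool) :=
  if I.2 then {(I.1, true), (I.1, false), (I.1 + 1, false)} else {(I.1, false)}

variable {I J : ℤ × Bool}

theorem card_intervalFaces (I : ℤ × Bool) :
    (intervalFaces I).card = if I.2 then 3 else 1 := by
  obtain ⟨l, _ | _⟩ := I <;> simp [intervalFaces]

theorem intervalMidpoint_mem_elemInterval (I : ℤ × Bool) :
    intervalMidpoint I ∈ elemInterval I := by
  obtain ⟨l, _ | _⟩ := I <;> norm_num [intervalMidpoint, elemInterval]

theorem elemInterval_subset_of_mem_intervalFaces (h : J ∈ intervalFaces I) :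
    elemInterval J ⊆ elemInterval I := by
  obtain ⟨l, _ | _⟩ := I
  · obtain rfl : J = (l, false) := by simpa [intervalFaces] using h
    exact subset_rfl
  · obtain rfl | rfl | rfl : J = (l, true) ∨ J = (l, false) ∨ J = (l + 1, false) := by
      simpa [intervalFaces] using h
    all_goals simp [elemInterval]

theorem mem_intervalFaces_of_intervalMidpoint_mem (h : intervalMidpoint J ∈ elemInterval I) :
    J ∈ intervalFaces I := by
  obtain ⟨l, p⟩ := I
  obtain ⟨k, q⟩ := J
  obtain ⟨hlower, hupper⟩ := h
  -- Doubling every coordinate turns midpoints into integers.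
  have lower_le : 2 * l ≤ 2 * k + (if q then 1 else 0) := by
    have : (2 * l : ℝ) ≤ 2 * k + (if q then 1 else 0) := by
      simp only [intervalMidpoint] at hlower
      split_ifs at hlower ⊢ <;> linarith
    exact_mod_cast this
  have le_upper : 2 * k + (if q then 1 else 0) ≤ 2 * l + (if p then 2 else 0) := by
    have : (2 * k + (if q then 1 else 0) : ℝ) ≤ 2 * l + (if p then 2 else 0) := by
      simp only [intervalMidpoint] at hupper
      split_ifs at hupper ⊢ <;> linarith
    exact_mod_cast this
  cases p <;> cases q <;> grind [intervalFaces]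

end Interval

section Cube

variable {d : ℕ} {P Q : ElemCube d} {X : Set (Fin d → ℝ)}

/-- The center of an elementary cube, a point that lies in no elementary cube other than those
containing the whole cube. -/
def cubeCenter (Q : ElemCube d) : Fin d → ℝ :=
  fun i => intervalMidpoint (Q i)

/-- The faces of an elementary cube, of every dimension and including the cube itself. -/
def cubeFaces (P : ElemCube d) : Finset (ElemCube d) :=
  Fintype.piFinset fun i => intervalFaces (P i)

theorem mem_cubeSet {x : Fin d → ℝ} : x ∈ cubeSet Q ↔ ∀ i, x i ∈ elemInterval (Q i) :=
  Iff.rfl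

theorem cubeCenter_mem_cubeSet (Q : ElemCube d) : cubeCenter Q ∈ cubeSet Q :=
  mem_cubeSet.mpr fun i => intervalMidpoint_mem_elemInterval (Q i)

theorem card_cubeFaces (P : ElemCube d) : (cubeFaces P).card = 3 ^ cubeDim P := by
  simp only [cubeFaces, Fintype.card_piFinset, card_intervalFaces, cubeDim, Finset.prod_ite,
    Finset.prod_const, one_pow, mul_one]

theorem mem_cubeFaces_of_cubeCenter_mem (h : cubeCenter Q ∈ cubeSet P) : Q ∈ cubeFaces P :=
  Fintype.mem_piFinset.mpr fun i =>
    mem_intervalFaces_of_intervalMidpoint_mem (mem_cubeSet.mp h i)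

theorem cubeSet_subset_of_mem_cubeFaces (h : Q ∈ cubeFaces P) : cubeSet Q ⊆ cubeSet P :=
  fun _ hx => mem_cubeSet.mpr fun i =>
    elemInterval_subset_of_mem_intervalFaces (Fintype.mem_piFinset.mp h i) (mem_cubeSet.mp hx i)

theorem IsCubical.cubeSet_subset_iff_cubeCenter_mem (hX : IsCubical X) :
    cubeSet Q ⊆ X ↔ cubeCenter Q ∈ X := by
  refine ⟨fun h => h (cubeCenter_mem_cubeSet Q), fun h => ?_⟩
  obtain ⟨S, rfl⟩ := hX
  obtain ⟨P, hPS, hP⟩ := Set.mem_iUnion₂.mp h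
  exact (cubeSet_subset_of_mem_cubeFaces (mem_cubeFaces_of_cubeCenter_mem hP)).trans
    (Set.subset_biUnion_of_mem (u := cubeSet) hPS)

end Cube

section Counting

theorem encard_biUnion_le_encard_mul {ι α : Type*} {s : Set ι} {t : ι → Set α} {c : ℕ∞}
    (h : ∀ i ∈ s, (t i).encard ≤ c) : (⋃ i ∈ s, t i).encard ≤ s.encard * c := by
  obtain hs | hs := s.finite_or_infinite
  · lift s to Finset ι using hs
    calc (⋃ i ∈ s, t i).encard ≤ ∑ i ∈ s, (t i).encard := s.set_encard_biUnion_le t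
      _ ≤ s.card • c := s.sum_le_card_nsmul _ c h
      _ = (s : Set ι).encard * c := by rw [Set.encard_coe_eq_coe_finsetCard, nsmul_eq_mul]
  · obtain rfl | hc := eq_or_ne c 0
    · simpa using h
    · simp [hs.encard_eq, ENat.top_mul hc]

variable {d : ℕ} {X Y Z : Set (Fin d → ℝ)} {S : Set (ElemCube d)}

theorem encard_cubeSet_subset_biUnion_le {n : ℕ} (hS : ∀ P ∈ S, cubeDim P ≤ n) :
    {Q : ElemCube d | cubeSet Q ⊆ ⋃ P ∈ S, cubeSet P}.encard ≤ S.encard * 3 ^ n := by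
  have subset_faces : {Q : ElemCube d | cubeSet Q ⊆ ⋃ P ∈ S, cubeSet P} ⊆
      ⋃ P ∈ S, (cubeFaces P : Set (ElemCube d)) := by
    intro Q hQ
    obtain ⟨P, hPS, hP⟩ := Set.mem_iUnion₂.mp (hQ (cubeCenter_mem_cubeSet Q))
    exact Set.mem_biUnion hPS (mem_cubeFaces_of_cubeCenter_mem hP)
  refine (Set.encard_le_encard subset_faces).trans (encard_biUnion_le_encard_mul fun P hP => ?_)
  rw [Set.encard_coe_eq_coe_finsetCard, card_cubeFaces]
  exact_mod_cast Nat.pow_le_pow_right three_pos (hS P hP)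

theorem encard_cubeSet_subset_le_add (hX : IsCubical X) (hZ : IsCubical Z) (hcover : Y \ X ⊆ Z) :
    {Q : ElemCube d | cubeSet Q ⊆ Y}.encard ≤
      {Q : ElemCube d | cubeSet Q ⊆ X}.encard + {Q : ElemCube d | cubeSet Q ⊆ Z}.encard := by
  refine (Set.encard_le_encard fun Q hQY => ?_).trans (Set.encard_union_le _ _)
  by_cases hQX : cubeCenter Q ∈ X
  · exact Or.inl (hX.cubeSet_subset_iff_cubeCenter_mem.mpr hQX)
  · exact Or.inr (hZ.cubeSet_subset_iff_cubeCenter_mem.mpr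
      (hcover ⟨hQY (cubeCenter_mem_cubeSet Q), hQX⟩))

end Counting

section Volume

variable {d : ℕ} {P Q : ElemCube d} {S : Set (ElemCube d)}

theorem cubeDim_eq_iff : cubeDim Q = d ↔ ∀ i, (Q i).2 = true := by
  simpa [cubeDim] using
    Finset.card_filter_eq_iff (s := Finset.univ) (p := fun i => (Q i).2 = true)

theorem cubeSet_eq_Icc (hQ : cubeDim Q = d) :
    cubeSet Q = Set.Icc (fun i => ((Q i).1 : ℝ)) (fun i => (Q i).1 + 1) := by
  ext x
  simp [cubeSet, cubeDim_eq_iff.mp hQ, Pi.le_def, forall_and]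

theorem volume_cubeSet (hQ : cubeDim Q = d) : volume (cubeSet Q) = 1 := by
  simp [cubeSet_eq_Icc hQ, Real.volume_Icc_pi]

theorem cubeSet_ae_eq_pi_Ico (hQ : cubeDim Q = d) :
    cubeSet Q =ᵐ[volume] Set.univ.pi fun i => Set.Ico ((Q i).1 : ℝ) ((Q i).1 + 1) := by
  rw [cubeSet_eq_Icc hQ]
  exact Measure.univ_pi_Ico_ae_eq_Icc.symm

theorem aedisjoint_cubeSet (hP : cubeDim P = d) (hQ : cubeDim Q = d) (hne : P ≠ Q) :
    AEDisjoint volume (cubeSet P) (cubeSet Q) := by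
  obtain ⟨i, hi⟩ := Function.ne_iff.mp hne
  have corner_ne : (P i).1 ≠ (Q i).1 := fun h =>
    hi (Prod.ext h ((cubeDim_eq_iff.mp hP i).trans (cubeDim_eq_iff.mp hQ i).symm))
  have disjoint_Ico : Disjoint (Set.univ.pi fun i => Set.Ico ((P i).1 : ℝ) ((P i).1 + 1))
      (Set.univ.pi fun i => Set.Ico ((Q i).1 : ℝ) ((Q i).1 + 1)) :=
    Set.disjoint_univ_pi.mpr ⟨i, Set.pairwise_disjoint_Ico_intCast ℝ corner_ne⟩
  exact disjoint_Ico.aedisjoint.congr (cubeSet_ae_eq_pi_Ico hP) (cubeSet_ae_eq_pi_Ico hQ)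

theorem volume_biUnion_cubeSet (hS : ∀ P ∈ S, cubeDim P = d) :
    volume (⋃ P ∈ S, cubeSet P) = S.encard := by
  have measurable_cubeSet (P) (hP : P ∈ S) : NullMeasurableSet (cubeSet P) volume := by
    rw [cubeSet_eq_Icc (hS P hP)]
    exact measurableSet_Icc.nullMeasurableSet
  calc volume (⋃ P ∈ S, cubeSet P) = ∑' P : S, volume (cubeSet P.1) :=
        measure_biUnion₀ S.to_countable
          (fun P hP Q hQ hne => aedisjoint_cubeSet (hS P hP) (hS Q hQ) hne) measurable_cubeSet
    _ = ∑' _ : S, 1 := tsum_congr fun P => volume_cubeSet (hS P P.2)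
    _ = S.encard := ENNReal.tsum_set_one S

end Volume

theorem count_diff_le_volume_general {d : ℕ} {ι : Sort*} {X Y : Set (Fin d → ℝ)}
    (hX : IsCubical X) (Qs : ι → ElemCube d) (hQdim : ∀ i, cubeDim (Qs i) = d)
    (hcover : Y \ X ⊆ ⋃ i, cubeSet (Qs i)) :
    ({Q : ElemCube d | cubeSet Q ⊆ Y}.encard : ℝ≥0∞) ≤
      ({Q : ElemCube d | cubeSet Q ⊆ X}.encard : ℝ≥0∞) + 3 ^ d * volume (⋃ i, cubeSet (Qs i)) := by
  have hdim : ∀ P ∈ Set.range Qs, cubeDim P = d := Set.forall_mem_range.mpr hQdim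
  rw [← Set.biUnion_range (g := cubeSet)] at hcover ⊢
  have count_le : {Q : ElemCube d | cubeSet Q ⊆ Y}.encard ≤
      {Q : ElemCube d | cubeSet Q ⊆ X}.encard + (Set.range Qs).encard * 3 ^ d := by
    refine (encard_cubeSet_subset_le_add hX ⟨_, rfl⟩ hcover).trans ?_
    gcongr
    exact encard_cubeSet_subset_biUnion_le fun P hP => (hdim P hP).le
  rw [volume_biUnion_cubeSet hdim, mul_comm]
  exact_mod_cast count_le

/-- Let `X ⊆ Y` be cubical sets in `ℝ^d` and suppose there is a cubical set
`Z = Q_1 ∪ ⋯ ∪ Q_m`, a finite union of `d`-dimensional elementary cubes, with `Y \ X ⊆ Z`.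
Then `#Y - #X ≤ 3^d |Z|`, i.e. `#Y ≤ #X + 3^d |Z|`, where `|Z|` is the Lebesgue measure
of `Z` (stated in `ℝ≥0∞`, using the extended cardinalities of the sets of elementary cubes
contained in `Y` resp. `X`). -/
theorem count_diff_le_volume (d m : ℕ) (X Y : Set (Fin d → ℝ))
    (hX : IsCubical X) (hY : IsCubical Y) (hXY : X ⊆ Y)
    (Qs : Fin m → ElemCube d) (hQdim : ∀ i, cubeDim (Qs i) = d)
    (Z : Set (Fin d → ℝ)) (hZ : Z = ⋃ i, cubeSet (Qs i))
    (hcover : Y \ X ⊆ Z) :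
    ({Q : ElemCube d | cubeSet Q ⊆ Y}.encard : ℝ≥0∞) ≤
      ({Q : ElemCube d | cubeSet Q ⊆ X}.encard : ℝ≥0∞) + 3 ^ d * volume Z := by
  subst hZ
  exact count_diff_le_volume_general hX Qs hQdim hcover

end
end
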